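/- For every n with n ≡ 0 or 1 (mod 4) and n ≥ 4, and for every integer h with ⌊(n+1)/2⌋ ≤ h ≤ ⌊3n/5⌋, there exists a self-complementary graph G on n vertices whose Hadwiger number equals h. -/

import Mathlib

/-- `G` has a complete minor of order `m`: there are `m` pairwise disjoint, nonempty,
connected branch sets with an edge of `G` between any two of them. -/
def HasCliqueMinor {V : Type*} (G : SimpleGraph V) (m : ℕ) : Prop :=
  ∃ B : Fin m → Set V,
    (∀ i, (B i).Nonempty) ∧
    (∀ i, (G.induce (B i)).Connected) ∧
    (Pairwise fun i j => Disjoint (B i) (B j)) ∧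
    ∀ i j, i ≠ j → ∃ x ∈ B i, ∃ y ∈ B j, G.Adj x y

/-- The Hadwiger number: the order of the largest complete minor. -/
noncomputable def hadwiger {V : Type*} (G : SimpleGraph V) : ℕ :=
  sSup {m | HasCliqueMinor G m}

/-- The 5-part construction: vertex set `R ⊕ Fin 4 × Fin q`, where parts
`0 = A`, `2 = C` carry `K_q`, parts `1 = B`, `3 = D` are edgeless, `R` carries `X`,
with complete joins `A–B`, `B–R`, `R–D`, `D–C`, `C–A`. -/
def fivePart {R : Type*} (X : SimpleGraph R) (q : ℕ) :
    SimpleGraph (R ⊕ Fin 4 × Fin q) :=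
  SimpleGraph.fromRel (fun u v =>
    match u, v with
    | Sum.inl x, Sum.inl y => X.Adj x y
    | Sum.inl _, Sum.inr (p, _) => p = 1 ∨ p = 3
    | Sum.inr (p, _), Sum.inl _ => p = 1 ∨ p = 3
    | Sum.inr (p, _), Sum.inr (p', _) =>
        (p = p' ∧ (p = 0 ∨ p = 2)) ∨
        (p = 0 ∧ p' = 1) ∨ (p = 2 ∧ p' = 0) ∨ (p = 3 ∧ p' = 2))

/-!
Blow up the path on four vertices, replacing the inner vertices by cliques and the outer ones by
independent sets of size `q`, and join every vertex of a self-complementary graph on `r` vertices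
to both outer parts. Rotating the parts maps the result to its complement. The `2q + r` vertices
outside the two independent sets cover all edges, and a branch set avoiding them is a single vertex
of degree at most `q + r`, so no complete minor has order larger than `2q + r`. If `r ≤ q` this is
attained by the single vertices of the two cliques and `r` stars with one leaf in each independent
set.

Here `n = 4q + r` and `h = 2q + r`, so `r = 2h - n`, which has to be `0` or `1` modulo `4`. For the
other residues one first adds a path on four single vertices to the `r` vertices, and attaches one
of these to a single outer part only. If the bound given by the cover were attained, the branch set
of this vertex and that of a vertex of the clique not adjacent to that outer part would be stars
without an edge between them. Hence exactly one branch set is lost: `n = 4q + r + 4` and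
`h = 2q + r + 3`.
-/

section ConnectedInduce

variable {V : Type*} {G : SimpleGraph V} {S : Set V} {u v : V}

theorem exists_adj_of_connected_induce (hS : (G.induce S).Connected) (hu : u ∈ S) (hv : v ∈ S)
    (huv : u ≠ v) : ∃ w ∈ S, G.Adj u w := by
  have : Nontrivial S := ⟨⟨u, hu⟩, ⟨v, hv⟩, fun h => huv (congrArg Subtype.val h)⟩
  have hiso : ¬ (G.induce S).IsIsolated ⟨u, hu⟩ := hS.preconnected.not_isIsolated _
  simp only [SimpleGraph.IsIsolated, not_forall, not_not] at hiso
  obtain ⟨w, hw⟩ := hiso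
  exact ⟨w, w.2, hw⟩

theorem connected_induce_insert (h : ∀ w ∈ S, G.Adj v w) :
    (G.induce (insert v S)).Connected := by
  rw [SimpleGraph.connected_iff_exists_forall_reachable]
  refine ⟨⟨v, Set.mem_insert v S⟩, ?_⟩
  rintro ⟨w, rfl | hw⟩
  · rfl
  · exact SimpleGraph.Adj.reachable (G := G.induce (insert v S)) (h w hw)

theorem connected_induce_image {W : Type*} {H : SimpleGraph W} (f : G →g H)
    (hS : (G.induce S).Connected) : (H.induce (f '' S)).Connected :=
  hS.map (SimpleGraph.induceHom f (Set.mapsTo_image f S)) (Set.surjective_mapsTo_image_restrict f S)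

end ConnectedInduce

/-- `B` is a family of branch sets of a complete minor of `G`. In contrast to `HasCliqueMinor` the
index type is arbitrary, so that models can be combined along sums of index types. -/
structure IsCliqueModel {V ι : Type*} (G : SimpleGraph V) (B : ι → Set V) : Prop where
  connected (i : ι) : (G.induce (B i)).Connected
  disjoint : Pairwise (Function.onFun Disjoint B)
  exists_adj : Pairwise fun i j => ∃ x ∈ B i, ∃ y ∈ B j, G.Adj x y

section CliqueModel

variable {V ι κ : Type*} {G : SimpleGraph V} {B : ι → Set V} {C : κ → Set V}

namespace IsCliqueModel

theorem nonempty (hB : IsCliqueModel G B) (i : ι) : (B i).Nonempty :=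
  Set.nonempty_coe_sort.mp (hB.connected i).nonempty

theorem hasCliqueMinor [Fintype ι] (hB : IsCliqueModel G B) :
    HasCliqueMinor G (Fintype.card ι) := by
  let e := (Fintype.equivFin ι).symm
  exact ⟨B ∘ e, fun i => hB.nonempty (e i), fun i => hB.connected (e i),
    fun i j hij => hB.disjoint (e.injective.ne hij),
    fun i j hij => hB.exists_adj (e.injective.ne hij)⟩

theorem image {W : Type*} {H : SimpleGraph W} (hB : IsCliqueModel G B) (f : G →g H)
    (hf : Function.Injective f) : IsCliqueModel H fun i => f '' B i where
  connected i := connected_induce_image f (hB.connected i)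
  disjoint i j hij := (Set.disjoint_image_iff hf).mpr (hB.disjoint hij)
  exists_adj i j hij := by
    obtain ⟨x, hx, y, hy, hxy⟩ := hB.exists_adj hij
    exact ⟨f x, Set.mem_image_of_mem f hx, f y, Set.mem_image_of_mem f hy, f.map_adj hxy⟩

theorem sumElim (hB : IsCliqueModel G B) (hC : IsCliqueModel G C)
    (hdisj : ∀ i j, Disjoint (B i) (C j)) (hadj : ∀ i j, ∃ x ∈ B i, ∃ y ∈ C j, G.Adj x y) :
    IsCliqueModel G (Sum.elim B C) where
  connected := Sum.rec hB.connected hC.connected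
  disjoint := by
    rintro (i | i) (j | j) hij
    · exact hB.disjoint fun h => hij (congrArg Sum.inl h)
    · exact hdisj i j
    · exact (hdisj j i).symm
    · exact hC.disjoint fun h => hij (congrArg Sum.inr h)
  exists_adj := by
    rintro (i | i) (j | j) hij
    · exact hB.exists_adj fun h => hij (congrArg Sum.inl h)
    · exact hadj i j
    · obtain ⟨x, hx, y, hy, hxy⟩ := hadj j i
      exact ⟨y, hy, x, hx, hxy.symm⟩
    · exact hC.exists_adj fun h => hij (congrArg Sum.inr h)

end IsCliqueModel

theorem HasCliqueMinor.exists_isCliqueModel {m : ℕ} (h : HasCliqueMinor G m) :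
    ∃ B : Fin m → Set V, IsCliqueModel G B :=
  let ⟨B, _, hconn, hdisj, hadj⟩ := h
  ⟨B, hconn, hdisj, hadj⟩

theorem HasCliqueMinor.map {W : Type*} {H : SimpleGraph W} {m : ℕ} (h : HasCliqueMinor G m)
    (f : G →g H) (hf : Function.Injective f) : HasCliqueMinor H m := by
  obtain ⟨B, hB⟩ := h.exists_isCliqueModel
  simpa only [Fintype.card_fin] using (hB.image f hf).hasCliqueMinor

theorem hadwiger_congr {W : Type*} {H : SimpleGraph W} (e : G ≃g H) :
    hadwiger G = hadwiger H :=
  congrArg sSup <| Set.ext fun _ =>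
    ⟨fun h => h.map e.toHom e.injective, fun h => h.map e.symm.toHom e.symm.injective⟩

theorem isCliqueModel_const {S : Set V} (hS : (G.induce S).Connected) :
    IsCliqueModel G fun _ : Unit => S where
  connected _ := hS
  disjoint := Subsingleton.pairwise
  exists_adj := Subsingleton.pairwise

theorem isCliqueModel_singleton {f : ι → V} (hf : Pairwise fun i j => G.Adj (f i) (f j)) :
    IsCliqueModel G fun i => {f i} where
  connected _ := SimpleGraph.Connected.of_subsingleton
  disjoint _ _ hij := Set.disjoint_singleton.mpr (hf hij).ne
  exists_adj i j hij := ⟨f i, rfl, f j, rfl, hf hij⟩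

theorem isCliqueModel_insert {hub : ι → V} {leaves : ι → Set V}
    (hhub : Function.Injective hub) (hleaves : Pairwise (Function.onFun Disjoint leaves))
    (hne : ∀ i, (leaves i).Nonempty) (hadj : ∀ i j, ∀ v ∈ leaves j, G.Adj (hub i) v) :
    IsCliqueModel G fun i => insert (hub i) (leaves i) where
  connected i := connected_induce_insert (hadj i i)
  disjoint i j hij := by
    have hmem : ∀ i j, hub i ∉ leaves j := fun i j h => G.irrefl (hadj i j _ h)
    simp only [Function.onFun, Set.disjoint_insert_left, Set.disjoint_insert_right,
      Set.mem_insert_iff, not_or]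
    exact ⟨⟨hhub.ne hij.symm, hmem j i⟩, hmem i j, hleaves hij⟩
  exists_adj i j _ := by
    obtain ⟨v, hv⟩ := hne j
    exact ⟨hub i, Or.inl rfl, v, Or.inr hv, hadj i j v hv⟩

end CliqueModel

section DisjointFamily

variable {V ι : Type*} [Fintype ι] {B : ι → Set V} {U : Finset V}

theorem card_le_card_of_forall_meets (hB : Pairwise (Function.onFun Disjoint B))
    (hU : ∀ i, ∃ u ∈ U, u ∈ B i) : Fintype.card ι ≤ U.card := by
  choose f hfU hfB using hU
  exact Finset.card_le_card_of_injOn f (fun i _ => hfU i) fun i _ j _ hij =>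
    hB.eq (Set.not_disjoint_iff.mpr ⟨f i, hfB i, hij ▸ hfB j⟩)

theorem exists_forall_mem_eq_of_card_le (hB : Pairwise (Function.onFun Disjoint B))
    (hU : ∀ i, ∃ u ∈ U, u ∈ B i) (hcard : U.card ≤ Fintype.card ι) {u : V} (hu : u ∈ U) :
    ∃ i, u ∈ B i ∧ ∀ w ∈ U, w ∈ B i → w = u := by
  choose f hfU hfB using hU
  have heq : ∀ i j, f i ∈ B j → i = j := fun i j h =>
    hB.eq (Set.not_disjoint_iff.mpr ⟨f i, hfB i, h⟩)
  have hsurj : Set.SurjOn f (Finset.univ : Finset ι) U :=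
    Finset.surjOn_of_injOn_of_card_le f (fun i _ => hfU i)
      (fun i _ j _ hij => heq i j (hij ▸ hfB j)) hcard
  obtain ⟨i, -, rfl⟩ := hsurj hu
  refine ⟨i, hfB i, fun w hw hwi => ?_⟩
  obtain ⟨j, -, rfl⟩ := hsurj hw
  rw [heq j i hwi]

end DisjointFamily

section VertexCover

variable {V ι : Type*} {G : SimpleGraph V} {B : ι → Set V} {S : Set V}
  {U : Finset V} {u v : V}

theorem eq_singleton_of_forall_notMem_isVertexCover (hS : (G.induce S).Connected)
    (hU : G.IsVertexCover U) (hSU : ∀ w ∈ U, w ∉ S) (hv : v ∈ S) : S = {v} := by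
  refine Set.eq_singleton_iff_unique_mem.mpr ⟨hv, fun w hw => ?_⟩
  by_contra hwv
  obtain ⟨x, hx, hwx⟩ := exists_adj_of_connected_induce hS hw hv hwv
  exact (hU hwx).elim (hSU w · hw) (hSU x · hx)

theorem subset_insert_neighborSet_diff_isVertexCover (hS : (G.induce S).Connected)
    (hU : G.IsVertexCover U) (hu : u ∈ S) (hSU : ∀ w ∈ U, w ∈ S → w = u) :
    S ⊆ insert u (G.neighborSet u \ U) := by
  intro w hw
  obtain rfl | hwu := eq_or_ne w u
  · exact Set.mem_insert w _
  · have hwU : w ∉ U := fun h => hwu (hSU w h hw)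
    obtain ⟨x, hx, hwx⟩ := exists_adj_of_connected_induce hS hw hu hwu
    obtain rfl := hSU x ((hU hwx).resolve_left hwU) hx
    exact Or.inr ⟨hwx.symm, hwU⟩

namespace IsCliqueModel

theorem card_le_degree_add_one [Fintype ι] [G.LocallyFinite] (hB : IsCliqueModel G B) {i : ι}
    (hi : B i = {v}) : Fintype.card ι ≤ G.degree v + 1 := by
  classical
  have hmeets : ∀ j, ∃ w ∈ insert v (G.neighborFinset v), w ∈ B j := by
    intro j
    obtain rfl | hij := eq_or_ne i j
    · exact ⟨v, Finset.mem_insert_self _ _, hi ▸ Set.mem_singleton v⟩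
    · obtain ⟨x, hx, y, hy, hxy⟩ := hB.exists_adj hij
      obtain rfl : x = v := by simpa only [hi, Set.mem_singleton_iff] using hx
      exact ⟨y, Finset.mem_insert_of_mem ((G.mem_neighborFinset x y).mpr hxy), hy⟩
  exact (card_le_card_of_forall_meets hB.disjoint hmeets).trans (Finset.card_insert_le _ _)

theorem forall_meets_or_card_le [Fintype ι] [G.LocallyFinite] (hB : IsCliqueModel G B)
    (hU : G.IsVertexCover U) {d : ℕ} (hd : ∀ v ∉ U, G.degree v ≤ d) :
    (∀ i, ∃ u ∈ U, u ∈ B i) ∨ Fintype.card ι ≤ d + 1 := by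
  refine or_iff_not_imp_left.mpr fun h => ?_
  push Not at h
  obtain ⟨i, hi⟩ := h
  obtain ⟨v, hv⟩ := hB.nonempty i
  have hsingle : B i = {v} :=
    eq_singleton_of_forall_notMem_isVertexCover (hB.connected i) hU hi hv
  exact (hB.card_le_degree_add_one hsingle).trans (Nat.succ_le_succ (hd v fun hvU => hi v hvU hv))

/- If the model attained `#U`, each branch set would be a star centred at its only vertex in `U`. -/
theorem card_lt_card_of_not_adj [Fintype ι] (hB : IsCliqueModel G B) (hU : G.IsVertexCover U)
    (hmeets : ∀ i, ∃ u ∈ U, u ∈ B i) (hu : u ∈ U) (hv : v ∈ U) (huv : u ≠ v)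
    (hsep : ∀ x ∈ insert u (G.neighborSet u \ U), ∀ y ∈ insert v (G.neighborSet v \ U),
      ¬ G.Adj x y) : Fintype.card ι < U.card := by
  by_contra! hcard
  obtain ⟨i, hui, hi⟩ := exists_forall_mem_eq_of_card_le hB.disjoint hmeets hcard hu
  obtain ⟨j, hvj, hj⟩ := exists_forall_mem_eq_of_card_le hB.disjoint hmeets hcard hv
  have hij : i ≠ j := by
    rintro rfl
    exact huv (hj u hu hui)
  obtain ⟨x, hx, y, hy, hxy⟩ := hB.exists_adj hij
  exact hsep x (subset_insert_neighborSet_diff_isVertexCover (hB.connected i) hU hui hi hx)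
    y (subset_insert_neighborSet_diff_isVertexCover (hB.connected j) hU hvj hj hy) hxy

end IsCliqueModel

end VertexCover

section SelfComplementary

/-- A graph isomorphic to its complement. -/
def IsSelfComplementary {V : Type*} (G : SimpleGraph V) : Prop :=
  Nonempty (G ≃g Gᶜ)

theorem isSelfComplementary_of_subsingleton {V : Type*} [Subsingleton V] (G : SimpleGraph V) :
    IsSelfComplementary G :=
  ⟨⟨Equiv.refl V, fun {a b} => by simp [Subsingleton.elim a b]⟩⟩

theorem IsSelfComplementary.of_iso {V W : Type*} {G : SimpleGraph V} {H : SimpleGraph W}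
    (hG : IsSelfComplementary G) (e : G ≃g H) : IsSelfComplementary H := by
  obtain ⟨t⟩ := hG
  have hadj : ∀ a b, H.Adj (e a) (e b) ↔ G.Adj a b := fun _ _ => e.map_adj_iff
  let eCompl : Gᶜ ≃g Hᶜ := ⟨e.toEquiv, by simp +contextual [SimpleGraph.compl_adj, hadj]⟩
  exact ⟨(e.symm.trans t).trans eCompl⟩

theorem IsSelfComplementary.exists_fin {V : Type*} [Fintype V] {G : SimpleGraph V} {n : ℕ}
    (hG : IsSelfComplementary G) (hn : Fintype.card V = n) :
    ∃ H : SimpleGraph (Fin n), IsSelfComplementary H ∧ hadwiger H = hadwiger G :=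
  let e := SimpleGraph.overFinIso G hn
  ⟨_, hG.of_iso e, (hadwiger_congr e).symm⟩

end SelfComplementary

/-- Adjacency of the vertices of two parts of a blow-up of the path `1 - 0 - 2 - 3` in which the
inner parts `0` and `2` become cliques and the outer parts `1` and `3` become independent sets.
The numbering is chosen so that `p ↦ p + 1` exchanges adjacency and non-adjacency. -/
def PartAdj (p p' : Fin 4) : Prop :=
  s(p, p') ∈ ({s(0, 0), s(2, 2), s(1, 0), s(0, 2), s(2, 3)} : Finset (Sym2 (Fin 4)))

instance : DecidableRel PartAdj := fun _ _ => inferInstanceAs (Decidable (_ ∈ _))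

theorem PartAdj.symm {p p' : Fin 4} (h : PartAdj p p') : PartAdj p' p := by
  unfold PartAdj at h ⊢
  rwa [Sym2.eq_swap (a := p') (b := p)]

theorem partAdj_zero_one : PartAdj 0 1 := by decide

theorem partAdj_zero_two : PartAdj 0 2 := by decide

theorem partAdj_two_three : PartAdj 2 3 := by decide

theorem partAdj_add_one (p p' : Fin 4) : PartAdj (p + 1) (p' + 1) ↔ ¬ PartAdj p p' := by
  revert p p'
  decide

/-- The extension of a graph `X` on `R` by a blow-up of a four-vertex path with parts of size `Q`,
where `x : R` is joined to the parts listed in `N x`. For `N x = {1, 3}` this is `fivePart`. -/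
def pathExtension {R : Type*} (X : SimpleGraph R) (N : R → Finset (Fin 4)) (Q : Type*) :
    SimpleGraph (R ⊕ Fin 4 × Q) where
  Adj
    | .inl x, .inl y => X.Adj x y
    | .inl x, .inr w => w.1 ∈ N x
    | .inr w, .inl x => w.1 ∈ N x
    | .inr w, .inr w' => PartAdj w.1 w'.1 ∧ w ≠ w'
  symm := ⟨by
    rintro (x | w) (y | w') h
    exacts [SimpleGraph.Adj.symm (G := X) h, h, h, ⟨h.1.symm, h.2.symm⟩]⟩
  loopless := ⟨by
    rintro (x | w) h
    exacts [X.irrefl h, h.2 rfl]⟩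

section PathExtension

variable {R Q ι : Type*} {X : SimpleGraph R} {N : R → Finset (Fin 4)}

@[simp]
theorem pathExtension_adj_inl_inl {x y : R} :
    (pathExtension X N Q).Adj (.inl x) (.inl y) ↔ X.Adj x y :=
  Iff.rfl

@[simp]
theorem pathExtension_adj_inl_inr {x : R} {w : Fin 4 × Q} :
    (pathExtension X N Q).Adj (.inl x) (.inr w) ↔ w.1 ∈ N x :=
  Iff.rfl

@[simp]
theorem pathExtension_adj_inr_inl {x : R} {w : Fin 4 × Q} :
    (pathExtension X N Q).Adj (.inr w) (.inl x) ↔ w.1 ∈ N x :=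
  Iff.rfl

@[simp]
theorem pathExtension_adj_inr_inr {w w' : Fin 4 × Q} :
    (pathExtension X N Q).Adj (.inr w) (.inr w') ↔ PartAdj w.1 w'.1 ∧ w ≠ w' :=
  Iff.rfl

/-- An isomorphism from `X` to its complement extends to `pathExtension X N Q` by rotating the
parts, provided it complements and rotates the attachment sets `N`. -/
def pathExtensionIsoCompl (t : X ≃g Xᶜ) (hN : ∀ x p, p + 1 ∈ N (t x) ↔ p ∉ N x) (Q : Type*) :
    pathExtension X N Q ≃g (pathExtension X N Q)ᶜ where
  toEquiv := t.toEquiv.sumCongr ((Equiv.addRight 1).prodCongr (Equiv.refl Q))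
  map_rel_iff' := by
    rintro (x | ⟨p, i⟩) (y | ⟨p', i'⟩)
    · have ht : Xᶜ.Adj (t x) (t y) ↔ X.Adj x y := t.map_adj_iff
      simpa [SimpleGraph.compl_adj] using ht
    · simp [SimpleGraph.compl_adj, hN]
    · simp [SimpleGraph.compl_adj, hN]
    · simp only [Equiv.sumCongr_apply, Equiv.prodCongr_apply, Equiv.coe_addRight, Equiv.coe_refl,
        Sum.map_inr, Prod.map_apply, id_eq, SimpleGraph.compl_adj, ne_eq, Sum.inr.injEq,
        Prod.mk.injEq, add_left_inj, pathExtension_adj_inr_inr, partAdj_add_one]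
      tauto

theorem add_one_mem_one_three (p : Fin 4) :
    p + 1 ∈ ({1, 3} : Finset (Fin 4)) ↔ p ∉ ({1, 3} : Finset (Fin 4)) := by
  revert p
  decide

theorem isSelfComplementary_pathExtension_const (hX : IsSelfComplementary X) (Q : Type*) :
    IsSelfComplementary (pathExtension X (fun _ => {1, 3}) Q) := by
  obtain ⟨t⟩ := hX
  exact ⟨pathExtensionIsoCompl t (fun _ => add_one_mem_one_three) Q⟩

theorem exists_isSelfComplementary (r : ℕ) (hr : r % 4 = 0 ∨ r % 4 = 1) :
    ∃ X : SimpleGraph (Fin r), IsSelfComplementary X := by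
  induction r using Nat.strong_induction_on with
  | _ r ih =>
    obtain hlt | hle := lt_or_ge r 2
    · have : Subsingleton (Fin r) := Fin.subsingleton_iff_le_one.mpr (by omega)
      exact ⟨⊥, isSelfComplementary_of_subsingleton ⊥⟩
    · obtain ⟨X, hX⟩ := ih (r - 4) (by omega) (by omega)
      have hcard : Fintype.card (Fin (r - 4) ⊕ Fin 4 × Unit) = r := by
        simp only [Fintype.card_sum, Fintype.card_prod, Fintype.card_fin, Fintype.card_unit]
        omega
      obtain ⟨Y, hY, -⟩ := (isSelfComplementary_pathExtension_const hX Unit).exists_fin hcard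
      exact ⟨Y, hY⟩

/-- All vertices of `pathExtension X N Q` outside the two independent parts. -/
def pathExtensionCover (R Q : Type*) [Fintype R] [Fintype Q] : Finset (R ⊕ Fin 4 × Q) :=
  Finset.univ.disjSum ({0, 2} ×ˢ Finset.univ)

section Upper

variable [Fintype R] [Fintype Q]

theorem card_pathExtensionCover :
    (pathExtensionCover R Q).card = 2 * Fintype.card Q + Fintype.card R := by
  simp [pathExtensionCover, add_comm]

@[simp]
theorem inl_mem_pathExtensionCover (x : R) : Sum.inl x ∈ pathExtensionCover R Q := by
  simp [pathExtensionCover]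

@[simp]
theorem inr_mem_pathExtensionCover {w : Fin 4 × Q} :
    Sum.inr w ∈ pathExtensionCover R Q ↔ w.1 = 0 ∨ w.1 = 2 := by
  simp [pathExtensionCover, Finset.mem_product]

theorem isVertexCover_pathExtensionCover :
    (pathExtension X N Q).IsVertexCover (pathExtensionCover R Q) := by
  have hpart : ∀ p p', PartAdj p p' → (p = 0 ∨ p = 2) ∨ (p' = 0 ∨ p' = 2) := by decide
  rintro (x | w) (y | w') h
  · simp
  · simp
  · simp
  · simpa using hpart w.1 w'.1 h.1

theorem degree_le_of_notMem_pathExtensionCover [(pathExtension X N Q).LocallyFinite]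
    {v : R ⊕ Fin 4 × Q} (hv : v ∉ pathExtensionCover R Q) :
    (pathExtension X N Q).degree v ≤ Fintype.card Q + Fintype.card R := by
  have hpart : ∀ p : Fin 4, ¬ (p = 0 ∨ p = 2) → ∃ s, ∀ p', PartAdj p p' → p' = s := by decide
  obtain x | w := v
  · simp at hv
  · obtain ⟨s, hs⟩ := hpart w.1 (by simpa using hv)
    have hsub : (pathExtension X N Q).neighborFinset (.inr w) ⊆
        Finset.univ.disjSum ({s} ×ˢ Finset.univ) := by
      rintro (y | w') h
      · simp
      · have hw' : w'.1 = s := hs w'.1 ((SimpleGraph.mem_neighborFinset _ _ _).mp h).1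
        rw [Finset.inr_mem_disjSum, Finset.mem_product]
        exact ⟨Finset.mem_singleton.mpr hw', Finset.mem_univ _⟩
    refine (Finset.card_le_card hsub).trans_eq ?_
    simp [add_comm]

theorem IsCliqueModel.meets_pathExtensionCover_or_card_le [Fintype ι]
    {B : ι → Set (R ⊕ Fin 4 × Q)} (hB : IsCliqueModel (pathExtension X N Q) B) :
    (∀ i, ∃ u ∈ pathExtensionCover R Q, u ∈ B i) ∨
      Fintype.card ι ≤ Fintype.card Q + Fintype.card R + 1 := by
  classical
  exact hB.forall_meets_or_card_le isVertexCover_pathExtensionCover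
    fun _ => degree_le_of_notMem_pathExtensionCover

theorem HasCliqueMinor.le_of_pathExtension {m : ℕ} (h : HasCliqueMinor (pathExtension X N Q) m)
    (hQ : 0 < Fintype.card Q) : m ≤ 2 * Fintype.card Q + Fintype.card R := by
  obtain ⟨B, hB⟩ := h.exists_isCliqueModel
  rw [← Fintype.card_fin m]
  obtain hmeets | hle := hB.meets_pathExtensionCover_or_card_le
  · exact (card_le_card_of_forall_meets hB.disjoint hmeets).trans_eq card_pathExtensionCover
  · omega

theorem not_adj_of_mem_insert_neighborSet_diff_pathExtensionCover (k : Q) {x : R}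
    (hx : N x = {3}) {v w : R ⊕ Fin 4 × Q}
    (hv : v ∈ insert (Sum.inr (0, k))
      ((pathExtension X N Q).neighborSet (.inr (0, k)) \ pathExtensionCover R Q))
    (hw : w ∈ insert (Sum.inl x)
      ((pathExtension X N Q).neighborSet (.inl x) \ pathExtensionCover R Q)) :
    ¬ (pathExtension X N Q).Adj v w := by
  have hpart : ∀ p, PartAdj 0 p → ¬ (p = 0 ∨ p = 2) → p = 1 := by decide
  have hsep : ∀ p, p = 0 ∨ p = 1 → p ≠ 3 ∧ ¬ PartAdj p 3 := by decide
  obtain ⟨u, hu, rfl⟩ : ∃ u : Fin 4 × Q, (u.1 = 0 ∨ u.1 = 1) ∧ v = .inr u := by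
    obtain rfl | ⟨hadj, hv⟩ := hv
    · exact ⟨_, Or.inl rfl, rfl⟩
    · obtain y | u := v
      · simp at hv
      · exact ⟨u, Or.inr (hpart u.1 hadj.1 (by simpa using hv)), rfl⟩
  obtain rfl | ⟨hadj, hw⟩ := hw
  · simpa [hx] using (hsep u.1 hu).1
  · obtain y | u' := w
    · simp at hw
    · have hu' : u'.1 = 3 := by simpa [hx] using hadj
      exact fun h => (hsep u.1 hu).2 (hu' ▸ h.1)

theorem HasCliqueMinor.lt_of_pathExtension {m : ℕ} (h : HasCliqueMinor (pathExtension X N Q) m)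
    (hQ : 1 < Fintype.card Q) {x : R} (hx : N x = {3}) :
    m < 2 * Fintype.card Q + Fintype.card R := by
  obtain ⟨B, hB⟩ := h.exists_isCliqueModel
  rw [← Fintype.card_fin m]
  obtain hmeets | hle := hB.meets_pathExtensionCover_or_card_le
  · obtain ⟨k⟩ : Nonempty Q := Fintype.card_pos_iff.mp (by omega)
    rw [← card_pathExtensionCover]
    exact hB.card_lt_card_of_not_adj isVertexCover_pathExtensionCover hmeets
      (u := .inr (0, k)) (v := .inl x) (by simp) (by simp) (by simp)
      fun _ hv _ hw => not_adj_of_mem_insert_neighborSet_diff_pathExtensionCover k hx hv hw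
  · omega

end Upper

theorem IsCliqueModel.hasCliqueMinor_pathExtension [Fintype ι] [Fintype Q]
    {B : ι → Set (R ⊕ Fin 4 × Q)}
    (hB : IsCliqueModel (pathExtension X N Q) B)
    (hnotMem : ∀ p, p = 0 ∨ p = 2 → ∀ k i, Sum.inr (p, k) ∉ B i)
    (hadj : ∀ p, p = 0 ∨ p = 2 → ∀ k i, ∃ v ∈ B i, (pathExtension X N Q).Adj (.inr (p, k)) v) :
    HasCliqueMinor (pathExtension X N Q) (2 * Fintype.card Q + Fintype.card ι) := by
  have hpart : ∀ p p', p = 0 ∨ p = 2 → p' = 0 ∨ p' = 2 → PartAdj p p' := by decide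
  let core : {p : Fin 4 // p = 0 ∨ p = 2} × Q → Fin 4 × Q := Prod.map Subtype.val id
  have hinj : Function.Injective core := Subtype.val_injective.prodMap Function.injective_id
  have hcore : IsCliqueModel (pathExtension X N Q) fun w => {Sum.inr (core w)} :=
    isCliqueModel_singleton fun w w' hww' => ⟨hpart _ _ w.1.2 w'.1.2, hinj.ne hww'⟩
  have hcard : Fintype.card {p : Fin 4 // p = 0 ∨ p = 2} = 2 := by decide
  have hmodel := hcore.sumElim hB
    (fun w i => Set.disjoint_singleton_left.mpr (hnotMem w.1 w.1.2 w.2 i))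
    (fun w i => ⟨_, rfl, hadj w.1 w.1.2 w.2 i⟩)
  simpa only [Fintype.card_sum, Fintype.card_prod, hcard] using hmodel.hasCliqueMinor

theorem hasCliqueMinor_pathExtension_const [Fintype R] [Fintype Q]
    (hRQ : Fintype.card R ≤ Fintype.card Q) :
    HasCliqueMinor (pathExtension X (fun _ => {1, 3}) Q)
      (2 * Fintype.card Q + Fintype.card R) := by
  obtain ⟨f⟩ := Function.Embedding.nonempty_of_card_le hRQ
  have hmodel : IsCliqueModel (pathExtension X (fun _ => {1, 3}) Q)
      fun x => {.inl x, .inr (1, f x), .inr (3, f x)} := by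
    refine isCliqueModel_insert Sum.inl_injective (fun x y hxy => ?_)
      (fun _ => Set.insert_nonempty _ _) (fun x y v hv => ?_)
    · simp [Function.onFun, f.injective.ne hxy.symm]
    · obtain rfl | rfl := hv <;> simp
  refine hmodel.hasCliqueMinor_pathExtension (fun p hp k x => ?_) (fun p hp k x => ?_)
  · obtain rfl | rfl := hp <;> simp
  · obtain rfl | rfl := hp
    · exact ⟨.inr (1, f x), by simp, partAdj_zero_one, by simp⟩
    · exact ⟨.inr (3, f x), by simp, partAdj_two_three, by simp⟩

theorem hadwiger_pathExtension_const [Fintype R] [Fintype Q] (hQ : 0 < Fintype.card Q)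
    (hRQ : Fintype.card R ≤ Fintype.card Q) :
    hadwiger (pathExtension X (fun _ => {1, 3}) Q) = 2 * Fintype.card Q + Fintype.card R :=
  IsGreatest.csSup_eq
    ⟨hasCliqueMinor_pathExtension_const hRQ, fun _ hm => hm.le_of_pathExtension hQ⟩

end PathExtension

section NestedExtension

variable {R Q : Type*} {X : SimpleGraph R}

/-- The parts of the second path to which the vertices of the first path are joined in
`nestedExtension`. Rotating both paths complements this relation. -/
def pathAttachment : Fin 4 → Finset (Fin 4) :=
  ![{3}, {1, 2, 3}, {1}, {0, 1, 3}]

theorem add_one_mem_pathAttachment_add_one (s p : Fin 4) :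
    p + 1 ∈ pathAttachment (s + 1) ↔ p ∉ pathAttachment s := by
  revert s p
  decide

/-- The attachment sets of a second path extension over a first one with parts of size one. -/
def nestedAttachment : R ⊕ Fin 4 × Unit → Finset (Fin 4) :=
  Sum.elim (fun _ => {1, 3}) fun w => pathAttachment w.1

/-- An extension of `X` by four single vertices and then by four parts of size `Q`. -/
abbrev nestedExtension (X : SimpleGraph R) (Q : Type*) :
    SimpleGraph ((R ⊕ Fin 4 × Unit) ⊕ Fin 4 × Q) :=
  pathExtension (pathExtension X (fun _ => {1, 3}) Unit) nestedAttachment Q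

theorem isSelfComplementary_nestedExtension (hX : IsSelfComplementary X) (Q : Type*) :
    IsSelfComplementary (nestedExtension X Q) := by
  obtain ⟨t⟩ := hX
  let t' := pathExtensionIsoCompl (N := fun _ => {1, 3}) t (fun _ => add_one_mem_one_three) Unit
  refine ⟨pathExtensionIsoCompl t' ?_ Q⟩
  rintro (_ | w) p
  · exact add_one_mem_one_three p
  · exact add_one_mem_pathAttachment_add_one w.1 p

/-- The centres of the star-shaped branch sets in `nestedExtension`. -/
def nestedHub : R ⊕ Bool → R ⊕ Fin 4 × Unit :=
  Sum.map id fun b => (cond b 3 1, ())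

theorem nestedHub_injective : Function.Injective (nestedHub : R ⊕ Bool → R ⊕ Fin 4 × Unit) :=
  Function.injective_id.sumMap (by decide)

theorem subset_nestedAttachment_nestedHub (i : R ⊕ Bool) :
    {1, 3} ⊆ nestedAttachment (nestedHub i) := by
  obtain _ | _ | _ := i
  · exact subset_rfl
  · exact (by decide : ({1, 3} : Finset (Fin 4)) ⊆ {1, 2, 3})
  · exact (by decide : ({1, 3} : Finset (Fin 4)) ⊆ {0, 1, 3})

/-- The leaves of the star-shaped branch sets in `nestedExtension`. -/
def nestedLeaves (f : R ⊕ Bool → Q) : R ⊕ Bool → Set ((R ⊕ Fin 4 × Unit) ⊕ Fin 4 × Q) :=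
  Sum.elim (fun x => {.inr (1, f (.inl x)), .inr (3, f (.inl x))})
    fun b => {.inr (cond b 3 1, f (.inr false))}

theorem isCliqueModel_insert_nestedHub (f : R ⊕ Bool ↪ Q) :
    IsCliqueModel (nestedExtension X Q)
      fun i => insert (.inl (nestedHub i)) (nestedLeaves f i) := by
  refine isCliqueModel_insert (Sum.inl_injective.comp nestedHub_injective) ?_ ?_ ?_
  · rintro (x | _ | _) (y | _ | _) hij <;>
      simp_all [Function.onFun, nestedLeaves, eq_comm]
  · rintro (x | b)
    · exact Set.insert_nonempty _ _
    · exact Set.singleton_nonempty _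
  · rintro i (y | _ | _) v hv
    · obtain rfl | rfl := hv <;> exact subset_nestedAttachment_nestedHub i (by simp)
    all_goals
      obtain rfl := hv
      exact subset_nestedAttachment_nestedHub i (by simp)

/-- The branch set in `nestedExtension` containing the vertices `0` and `2` of the first path, which
are the ones not in `nestedHub`. -/
def nestedPair (k : Q) : Set ((R ⊕ Fin 4 × Unit) ⊕ Fin 4 × Q) :=
  {.inl (.inr (0, ())), .inr (3, k)} ∪ {.inl (.inr (2, ())), .inr (1, k)}

theorem connected_induce_nestedPair (k : Q) :
    ((nestedExtension X Q).induce (nestedPair k)).Connected := by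
  have hzero : (nestedExtension X Q).Adj (.inl (.inr (0, ()))) (.inr (3, k)) :=
    Finset.mem_singleton_self 3
  have htwo : (nestedExtension X Q).Adj (.inl (.inr (2, ()))) (.inr (1, k)) :=
    Finset.mem_singleton_self 1
  exact SimpleGraph.connected_induce_union
    (SimpleGraph.induce_pair_connected_of_adj hzero).preconnected
    (SimpleGraph.induce_pair_connected_of_adj htwo).preconnected
    (Or.inl rfl) (Or.inl rfl) ⟨partAdj_zero_two, by decide⟩

/-- The branch sets in `nestedExtension` other than the single vertices of the clique parts. -/
def nestedModel (f : R ⊕ Bool → Q) :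
    (R ⊕ Bool) ⊕ Unit → Set ((R ⊕ Fin 4 × Unit) ⊕ Fin 4 × Q) :=
  Sum.elim (fun i => insert (.inl (nestedHub i)) (nestedLeaves f i))
    fun _ => nestedPair (f (.inr true))

theorem isCliqueModel_nestedModel (f : R ⊕ Bool ↪ Q) :
    IsCliqueModel (nestedExtension X Q) (nestedModel f) := by
  refine (isCliqueModel_insert_nestedHub f).sumElim
    (isCliqueModel_const (connected_induce_nestedPair (f (.inr true)))) ?_ ?_
  · rintro (x | _ | _) _ <;> simp [nestedHub, nestedLeaves, nestedPair]
  · intro i _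
    exact ⟨_, Or.inl rfl, .inr (1, f (.inr true)), by simp [nestedPair],
      subset_nestedAttachment_nestedHub i (by simp)⟩

theorem exists_mem_nestedModel_adj (f : R ⊕ Bool → Q) {p : Fin 4} (hp : p = 0 ∨ p = 2) (k : Q)
    (i : (R ⊕ Bool) ⊕ Unit) :
    ∃ v ∈ nestedModel f i, (nestedExtension X Q).Adj (.inr (p, k)) v := by
  obtain (x | _ | _) | _ := i <;> obtain rfl | rfl := hp
  · exact ⟨.inr (1, f (.inl x)), Or.inr (Or.inl rfl), partAdj_zero_one, by simp⟩
  · exact ⟨.inr (3, f (.inl x)), Or.inr (Or.inr rfl), partAdj_two_three, by simp⟩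
  · exact ⟨.inr (1, f (.inr false)), Or.inr rfl, partAdj_zero_one, by simp⟩
  · exact ⟨.inl (.inr (1, ())), Or.inl rfl, (by decide : (2 : Fin 4) ∈ pathAttachment 1)⟩
  · exact ⟨.inl (.inr (3, ())), Or.inl rfl, (by decide : (0 : Fin 4) ∈ pathAttachment 3)⟩
  · exact ⟨.inr (3, f (.inr false)), Or.inr rfl, partAdj_two_three, by simp⟩
  · exact ⟨.inr (1, f (.inr true)), Or.inr (Or.inr rfl), partAdj_zero_one, by simp⟩
  · exact ⟨.inr (3, f (.inr true)), Or.inl (Or.inr rfl), partAdj_two_three, by simp⟩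

theorem hasCliqueMinor_nestedExtension [Fintype R] [Fintype Q]
    (hRQ : Fintype.card R + 2 ≤ Fintype.card Q) :
    HasCliqueMinor (nestedExtension X Q) (2 * Fintype.card Q + (Fintype.card R + 3)) := by
  have hcard : Fintype.card (R ⊕ Bool) ≤ Fintype.card Q := by simpa using hRQ
  obtain ⟨f⟩ := Function.Embedding.nonempty_of_card_le hcard
  have hminor := (isCliqueModel_nestedModel (X := X) f).hasCliqueMinor_pathExtension ?_
    fun p hp k i => exists_mem_nestedModel_adj f hp k i
  · simpa [add_assoc] using hminor
  · rintro p hp k ((x | _ | _) | _) <;> obtain rfl | rfl := hp <;>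
      simp [nestedModel, nestedLeaves, nestedPair]

theorem hadwiger_nestedExtension [Fintype R] [Fintype Q]
    (hRQ : Fintype.card R + 2 ≤ Fintype.card Q) :
    hadwiger (nestedExtension X Q) = 2 * Fintype.card Q + Fintype.card R + 3 := by
  refine IsGreatest.csSup_eq ⟨hasCliqueMinor_nestedExtension hRQ, fun m hm => ?_⟩
  have hlt := hm.lt_of_pathExtension (by omega) (x := .inr (0, ())) rfl
  simp only [Fintype.card_sum, Fintype.card_prod, Fintype.card_fin, Fintype.card_unit] at hlt
  omega

end NestedExtension

section Family

variable {q r : ℕ}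

theorem exists_isSelfComplementary_hadwiger_eq_two_mul_add (hr : r % 4 = 0 ∨ r % 4 = 1)
    (hq : 0 < q) (hrq : r ≤ q) :
    ∃ G : SimpleGraph (Fin (4 * q + r)), IsSelfComplementary G ∧ hadwiger G = 2 * q + r := by
  obtain ⟨X, hX⟩ := exists_isSelfComplementary r hr
  have hcard : Fintype.card (Fin r ⊕ Fin 4 × Fin q) = 4 * q + r := by simp [add_comm]
  obtain ⟨G, hG, hGX⟩ := (isSelfComplementary_pathExtension_const hX (Fin q)).exists_fin hcard
  refine ⟨G, hG, hGX.trans ?_⟩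
  simpa using hadwiger_pathExtension_const (X := X) (Q := Fin q) (by simpa using hq)
    (by simpa using hrq)

theorem exists_isSelfComplementary_hadwiger_eq_two_mul_add_add_three
    (hr : r % 4 = 0 ∨ r % 4 = 1) (hrq : r + 2 ≤ q) :
    ∃ G : SimpleGraph (Fin (4 * q + r + 4)), IsSelfComplementary G ∧
      hadwiger G = 2 * q + r + 3 := by
  obtain ⟨X, hX⟩ := exists_isSelfComplementary r hr
  have hcard : Fintype.card ((Fin r ⊕ Fin 4 × Unit) ⊕ Fin 4 × Fin q) = 4 * q + r + 4 := by
    simp only [Fintype.card_sum, Fintype.card_prod, Fintype.card_fin, Fintype.card_unit]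
    ring
  obtain ⟨G, hG, hGX⟩ := (isSelfComplementary_nestedExtension hX (Fin q)).exists_fin hcard
  refine ⟨G, hG, hGX.trans ?_⟩
  simpa using hadwiger_nestedExtension (X := X) (Q := Fin q) (by simpa using hrq)

end Family

/-- main theorem: for every `n ≡ 0, 1 (mod 4)` with `n ≥ 4` and every
`⌊(n+1)/2⌋ ≤ h ≤ ⌊3n/5⌋` there is a self-complementary graph on `n` vertices with
Hadwiger number exactly `h`. -/
theorem stmt17 (n : ℕ) (hmod : n % 4 = 0 ∨ n % 4 = 1) (hn : 4 ≤ n)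
    (h : ℕ) (h1 : (n + 1) / 2 ≤ h) (h2 : h ≤ 3 * n / 5) :
    ∃ G : SimpleGraph (Fin n), Nonempty (G ≃g Gᶜ) ∧ hadwiger G = h := by
  obtain hr | hr : ((2 * h - n) % 4 = 0 ∨ (2 * h - n) % 4 = 1) ∨
      ((2 * h - n) % 4 = 2 ∨ (2 * h - n) % 4 = 3) := by omega
  · obtain ⟨q, r, hr', hq, hrq, rfl, rfl⟩ : ∃ q r, (r % 4 = 0 ∨ r % 4 = 1) ∧ 0 < q ∧ r ≤ q ∧
        n = 4 * q + r ∧ h = 2 * q + r :=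
      ⟨(n - h) / 2, 2 * h - n, hr, by omega⟩
    exact exists_isSelfComplementary_hadwiger_eq_two_mul_add hr' hq hrq
  · obtain ⟨q, r, hr', hrq, rfl, rfl⟩ : ∃ q r, (r % 4 = 0 ∨ r % 4 = 1) ∧ r + 2 ≤ q ∧
        n = 4 * q + r + 4 ∧ h = 2 * q + r + 3 :=
      ⟨(n - h) / 2, 2 * h - n - 2, by omega⟩
    exact exists_isSelfComplementary_hadwiger_eq_two_mul_add_add_three hr' hrq
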